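/- arXiv:0901.2621 — 2 statements merged into one kernel-verified Lean document; each statement's English description precedes it below -/
import Mathlib

section
/- Let X be a T0 Alexandroff space in which every chain of the specialization order is finite, and let x ∈ X be a point such that for every y ∈ X there exists one and only one s-path (x = s^0, s^1, …, s^n = y) from x to y with the property that for each 0 ≤ i < n, one of s^i, s^{i+1} covers the other in the specialization order. Then {x} is a strong deformation retract of X. -/
/-- Specialization order on a topological space: `x ≤ y` iff `y ∈ closure {x}`. -/
def specLE {X : Type*} [TopologicalSpace X] (x y : X) : Prop := y ∈ closure ({x} : Set X)

/-- Comparability in the specialization order. -/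
def specComp {X : Type*} [TopologicalSpace X] (x y : X) : Prop := specLE x y ∨ specLE y x

/-- `b` covers `a` in the specialization order: `a < b` with nothing strictly between. -/
def specCovers {X : Type*} [TopologicalSpace X] (a b : X) : Prop :=
  specLE a b ∧ a ≠ b ∧ ∀ c, specLE a c → specLE c b → c = a ∨ c = b

/-- `IsCoverSPath l a b`: `l` is an s-path from `a` to `b` (pairwise distinct points)
such that each point covers, or is covered by, the next one. -/
def IsCoverSPath {X : Type*} [TopologicalSpace X] (l : List X) (a b : X) : Prop :=
  l ≠ [] ∧ l.Nodup ∧ l.head? = some a ∧ l.getLast? = some b ∧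
    l.Chain' (fun u v => specCovers u v ∨ specCovers v u)

section helpers

theorem specLE_iff' {X : Type*} [TopologicalSpace X] (a b : X) : specLE a b ↔ a ⤳ b :=
  specializes_iff_mem_closure.symm

theorem specLE_rfl' {X : Type*} [TopologicalSpace X] (a : X) : specLE a a :=
  (specLE_iff' a a).2 specializes_rfl

theorem specLE_trans' {X : Type*} [TopologicalSpace X] {a b c : X} (h : specLE a b)
    (h' : specLE b c) : specLE a c :=
  (specLE_iff' a c).2 (((specLE_iff' a b).1 h).trans ((specLE_iff' b c).1 h'))

theorem specLE_antisymm' {X : Type*} [TopologicalSpace X] [T0Space X] {a b : X} (h : specLE a b)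
    (h' : specLE b a) : a = b :=
  (((specLE_iff' a b).1 h).antisymm ((specLE_iff' b a).1 h')).eq

/-- The order. -/
abbrev specPO (X : Type*) [TopologicalSpace X] [T0Space X] : PartialOrder X where
  le := specLE
  le_refl := specLE_rfl'
  le_trans _ _ _ := specLE_trans'
  le_antisymm _ _ := specLE_antisymm'

theorem order_ind {α : Type*} [PartialOrder α]
    (hchain : ∀ C : Set α, (∀ a ∈ C, ∀ b ∈ C, a ≠ b → (a ≤ b ∨ b ≤ a)) → C.Finite)
    (a b : α) (h : a ≤ b) : Relation.ReflTransGen (fun u v => u ⋖ v) a b := by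
  have wlt : WellFounded ((· < ·) : α → α → Prop) := by
    rw [RelEmbedding.wellFounded_iff_isEmpty]
    refine ⟨fun f => ?_⟩
    have hf : (Set.range f).Finite := by
      apply hchain
      rintro _ ⟨i, rfl⟩ _ ⟨j, rfl⟩ hne
      rcases lt_trichotomy i j with h | h | h
      · exact Or.inr (f.map_rel_iff.2 h).le
      · exact absurd (by rw [h]) hne
      · exact Or.inl (f.map_rel_iff.2 h).le
    exact Set.infinite_range_of_injective f.injective hf
  have wgt : WellFounded ((· > ·) : α → α → Prop) := by
    rw [RelEmbedding.wellFounded_iff_isEmpty]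
    refine ⟨fun f => ?_⟩
    have hf : (Set.range f).Finite := by
      apply hchain
      rintro _ ⟨i, rfl⟩ _ ⟨j, rfl⟩ hne
      rcases lt_trichotomy i j with h | h | h
      · exact Or.inl (f.map_rel_iff.2 h).le
      · exact absurd (by rw [h]) hne
      · exact Or.inr (f.map_rel_iff.2 h).le
    exact Set.infinite_range_of_injective f.injective hf
  have := IsStronglyCoatomic.of_wellFounded_gt wgt
  induction b using wlt.induction with
  | _ b ih =>
    rcases h.eq_or_lt with rfl | hlt
    · exact .refl
    · obtain ⟨c, hac, hcb⟩ := exists_le_covBy_of_lt hlt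
      exact (ih c hcb.lt hac).tail hcb

theorem spec_ind {X : Type*} [TopologicalSpace X] [T0Space X]
    (hchain : ∀ C : Set X, (∀ a ∈ C, ∀ b ∈ C, a ≠ b → specComp a b) → C.Finite)
    (a b : X) (h : specLE a b) : Relation.ReflTransGen specCovers a b := by
  let _ := specPO X
  refine Relation.ReflTransGen.mono (fun u v huv => ?_) a b (order_ind hchain a b h)
  refine ⟨huv.le, huv.ne, fun c h1 h2 => ?_⟩
  exact huv.eq_or_eq h1 h2

theorem path_adj {X : Type*} [TopologicalSpace X] (x : X) (p : X → List X)
    (hp : ∀ y, IsCoverSPath (p y) x y) (hu : ∀ y l, IsCoverSPath l x y → l = p y)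
    (u v : X) (huv : specCovers u v ∨ specCovers v u) :
    p v = p u ++ [v] ∨ p u = p v ++ [u] := by
  have hne : u ≠ v := by
    rcases huv with h | h
    · exact h.2.1
    · exact h.2.1.symm
  by_cases hv : v ∈ p u
  · right
    obtain ⟨l1, l2, hl⟩ := List.append_of_mem hv
    obtain ⟨-, hnd, hh, hlast, hc⟩ := hp u
    have hc' : (p u).IsChain _ := hc
    have e1 : l1 ++ [v] = p v := by
      apply hu
      rw [hl] at hnd hh hc'
      refine ⟨by simp, ?_, ?_, by simp, ?_⟩
      · refine hnd.sublist ?_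
        simp
      · cases l1 <;> simpa using hh
      · have : l1 ++ v :: l2 = (l1 ++ [v]) ++ l2 := by simp
        rw [this] at hc'
        exact hc'.left_of_append
    have hul : u ∈ l2 := by
      rw [hl] at hlast
      rcases List.eq_nil_or_concat l2 with rfl | ⟨l3, w, rfl⟩
      · simp at hlast; exact absurd hlast.symm hne
      · have : l1 ++ v :: (l3 ++ [w]) = (l1 ++ v :: l3) ++ [w] := by simp
        rw [List.concat_eq_append, this, List.getLast?_concat] at hlast
        simp at hlast
        simp [hlast]
    symm
    rw [← e1]
    apply hu
    obtain ⟨-, hnd', hh', -, hc1⟩ := hp v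
    rw [← e1] at hnd' hh' hc1
    have hc1' : (l1 ++ [v]).IsChain _ := hc1
    refine ⟨by simp, ?_, ?_, by simp, ?_⟩
    · rw [hl] at hnd
      refine hnd.sublist ?_
      simpa using hul
    · cases l1 <;> simpa using hh'
    · show List.IsChain _ _
      rw [List.isChain_append]
      refine ⟨hc1', by simp, ?_⟩
      simp only [List.getLast?_concat, List.head?_cons, Option.mem_some_iff]
      rintro _ rfl _ rfl
      exact huv.symm
  · left
    symm
    apply hu
    obtain ⟨hn, hnd, hh, hlast, hc⟩ := hp u
    have hc' : (p u).IsChain _ := hc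
    refine ⟨by simp, ?_, ?_, by simp, ?_⟩
    · rw [List.nodup_append]
      refine ⟨hnd, by simp, ?_⟩
      intro a ha b hb
      simp at hb
      rintro rfl
      exact hv (hb ▸ ha)
    · cases h : p u with
      | nil => exact absurd h hn
      | cons a l => rw [h] at hh; simpa using hh
    · show List.IsChain _ _
      rw [List.isChain_append]
      refine ⟨hc', by simp, ?_⟩
      rw [hlast]
      simp only [List.head?_cons, Option.mem_some_iff]
      rintro _ rfl _ rfl
      exact huv

/-- The ancestor map. -/
def anc {X : Type*} (x : X) (p : X → List X) (n : ℕ) (y : X) : X :=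
  (p y).getD (min n ((p y).length - 1)) x

open Classical in
/-- The larger of two ancestors. -/
noncomputable def mx {X : Type*} [TopologicalSpace X] (x : X) (p : X → List X) (n k : ℕ) (y : X) :
    X :=
  if specLE (anc x p k y) (anc x p n y) then anc x p n y else anc x p k y

theorem anc_big {X : Type*} [TopologicalSpace X] (x : X) (p : X → List X)
    (hp : ∀ y, IsCoverSPath (p y) x y) (n : ℕ) (y : X) (h : (p y).length ≤ n + 1) :
    anc x p n y = y := by
  have h1 : min n ((p y).length - 1) = (p y).length - 1 := by omega
  have := (hp y).2.2.2.1
  rw [List.getLast?_eq_getElem?] at this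
  rw [anc, h1, List.getD_eq_getElem?_getD, this]
  rfl

theorem anc_append {X : Type*} (x : X) (p : X → List X) (n : ℕ) (u v : X)
    (huv : p v = p u ++ [v]) (h : n + 1 ≤ (p u).length) : anc x p n v = anc x p n u := by
  have h1 : min n ((p u).length - 1) = n := by omega
  have h2 : min n ((p v).length - 1) = n := by rw [huv]; simp; omega
  rw [anc, anc, h1, h2, huv, List.getD_append _ _ _ _ (by omega)]

theorem anc_zero {X : Type*} [TopologicalSpace X] (x : X) (p : X → List X)
    (hp : ∀ y, IsCoverSPath (p y) x y) (y : X) : anc x p 0 y = x := by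
  have := (hp y).2.2.1
  rw [List.head?_eq_getElem?] at this
  simp [anc, this]

theorem anc_comp {X : Type*} [TopologicalSpace X] (x : X) (p : X → List X)
    (hp : ∀ y, IsCoverSPath (p y) x y) (n k : ℕ) (hkn : k ≤ n) (hnk : n ≤ k + 1) (y : X) :
    specComp (anc x p n y) (anc x p k y) := by
  by_cases h : (p y).length ≤ k + 1
  · rw [anc_big x p hp n y (by omega), anc_big x p hp k y h]
    exact Or.inl (specLE_rfl' _)
  · obtain rfl | rfl : n = k ∨ n = k + 1 := by omega
    · exact Or.inl (specLE_rfl' _)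
    · have hc : (p y).IsChain _ := (hp y).2.2.2.2
      rw [List.isChain_iff_getElem] at hc
      have := hc k (by omega)
      have h1 : min (k+1) ((p y).length - 1) = k + 1 := by omega
      have h2 : min k ((p y).length - 1) = k := by omega
      rw [anc, anc, h1, h2, List.getD_eq_getElem _ _ (by omega), List.getD_eq_getElem _ _ (by omega)]
      rcases this with h | h
      · exact Or.inr h.1
      · exact Or.inl h.1

theorem le_mx {X : Type*} [TopologicalSpace X] (x : X) (p : X → List X)
    (hp : ∀ y, IsCoverSPath (p y) x y) (n k : ℕ) (hkn : k ≤ n) (hnk : n ≤ k + 1) (y : X) :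
    specLE (anc x p n y) (mx x p n k y) ∧ specLE (anc x p k y) (mx x p n k y) := by
  unfold mx
  split_ifs with h
  · exact ⟨specLE_rfl' _, h⟩
  · exact ⟨(anc_comp x p hp n k hkn hnk y).resolve_right h, specLE_rfl' _⟩

theorem mx_step {X : Type*} [TopologicalSpace X] [T0Space X] (x : X) (p : X → List X)
    (hp : ∀ y, IsCoverSPath (p y) x y) (n k : ℕ) (hkn : k ≤ n) (hnk : n ≤ k + 1) (u v : X)
    (huv : p v = p u ++ [v]) :
    (specLE u v → specLE (mx x p n k u) (mx x p n k v)) ∧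
    (specLE v u → specLE (mx x p n k v) (mx x p n k u)) := by
  have hl : (p v).length = (p u).length + 1 := by rw [huv]; simp
  by_cases h1 : n + 1 ≤ (p u).length
  · have e1 := anc_append x p n u v huv h1
    have e2 := anc_append x p k u v huv (by omega)
    have : mx x p n k u = mx x p n k v := by unfold mx; rw [e1, e2]
    rw [this]
    exact ⟨fun _ => specLE_rfl' _, fun _ => specLE_rfl' _⟩
  · have e1 := anc_big x p hp n u (by omega)
    have e2 := anc_big x p hp n v (by omega)
    by_cases h2 : k + 1 ≤ (p u).length
    · have e3 := anc_append x p k u v huv h2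
      have e4 := anc_big x p hp k u (by omega)
      have hmu : mx x p n k u = u := by unfold mx; rw [e1, e4]; simp
      rw [hmu]
      unfold mx
      rw [e2, e3, e4]
      split_ifs with h
      · exact ⟨id, id⟩
      · exact ⟨fun _ => specLE_rfl' _, fun _ => specLE_rfl' _⟩
    · have e3 := anc_big x p hp k u (by omega)
      have e4 := anc_big x p hp k v (by omega)
      have hmu : mx x p n k u = u := by unfold mx; rw [e1, e3]; simp
      have hmv : mx x p n k v = v := by unfold mx; rw [e2, e4]; simp
      rw [hmu, hmv]
      exact ⟨id, id⟩

theorem mx_mono {X : Type*} [TopologicalSpace X] [T0Space X]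
    (hchain : ∀ C : Set X, (∀ a ∈ C, ∀ b ∈ C, a ≠ b → specComp a b) → C.Finite)
    (x : X) (p : X → List X)
    (hp : ∀ y, IsCoverSPath (p y) x y) (hu : ∀ y l, IsCoverSPath l x y → l = p y)
    (n k : ℕ) (hkn : k ≤ n) (hnk : n ≤ k + 1) (u v : X)
    (huv : specLE u v) : specLE (mx x p n k u) (mx x p n k v) := by
  induction spec_ind hchain u v huv with
  | refl => exact specLE_rfl' _
  | tail h1 h2 ih =>
    rename_i b c
    have hub : specLE u b := by
      clear ih h2 huv
      induction h1 with
      | refl => exact specLE_rfl' _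
      | tail _ h ih => exact specLE_trans' ih h.1
    refine specLE_trans' (ih hub) ?_
    rcases path_adj x p hp hu b c (Or.inl h2) with h | h
    · exact (mx_step x p hp n k hkn hnk b c h).1 h2.1
    · exact (mx_step x p hp n k hkn hnk c b h).2 h2.1

open Classical in
/-- The homotopy. -/
noncomputable def hty {X : Type*} [TopologicalSpace X] (x : X) (p : X → List X)
    (q : X × unitInterval) : X :=
  if q.2 = 0 then q.1 else
    mx x p ⌊1 / (q.2 : ℝ) - 1⌋₊ (⌈1 / (q.2 : ℝ) - 1⌉₊ - 1) q.1

theorem fl_ce (u : ℝ) : ⌈u⌉₊ - 1 ≤ ⌊u⌋₊ ∧ ⌊u⌋₊ ≤ ⌈u⌉₊ - 1 + 1 := by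
  have h1 := Nat.ceil_le_floor_add_one u
  have h2 := Nat.floor_le_ceil u
  omega

theorem hty_cont {X : Type*} [TopologicalSpace X] [AlexandrovDiscrete X] [T0Space X]
    (hchain : ∀ C : Set X, (∀ a ∈ C, ∀ b ∈ C, a ≠ b → specComp a b) → C.Finite)
    (x : X) (p : X → List X)
    (hp : ∀ y, IsCoverSPath (p y) x y) (hu : ∀ y l, IsCoverSPath l x y → l = p y) :
    Continuous (hty x p) := by
  have key : ∀ (z : X) (t : unitInterval), ∀ᶠ s in nhds t, ∀ w, specLE w z →
      specLE (hty x p (w, s)) (hty x p (z, t)) := by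
    intro z t
    by_cases ht : t = 0
    · subst ht
      have hpos : (0 : ℝ) < 1 / ((p z).length + 3) := by positivity
      have hev : ∀ᶠ s : unitInterval in nhds 0, (s : ℝ) < 1 / ((p z).length + 3) :=
        continuous_subtype_val.continuousAt.eventually_lt continuousAt_const (by simpa using hpos)
      filter_upwards [hev] with s hs w hw
      have e0 : hty x p (z, 0) = z := by simp [hty]
      rw [e0]
      by_cases hs0 : s = 0
      · subst hs0; simpa [hty] using hw
      have hsp : (0 : ℝ) < s := unitInterval.pos_iff_ne_zero.2 hs0
      have hbig : ((p z).length + 3 : ℝ) < 1 / s := by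
        rw [lt_div_iff₀ hsp]
        rw [lt_div_iff₀ (by positivity)] at hs
        linarith
      obtain ⟨h1, h2⟩ := fl_ce (1 / (s : ℝ) - 1)
      have h3 : (p z).length + 2 ≤ ⌊1 / (s : ℝ) - 1⌋₊ := by
        apply Nat.le_floor
        push_cast
        linarith
      have hm := mx_mono hchain x p hp hu _ _ h1 h2 w z hw
      have e1 := anc_big x p hp ⌊1 / (s : ℝ) - 1⌋₊ z (by omega)
      have e2 := anc_big x p hp (⌈1 / (s : ℝ) - 1⌉₊ - 1) z (by omega)
      have e3 : mx x p ⌊1 / (s : ℝ) - 1⌋₊ (⌈1 / (s : ℝ) - 1⌉₊ - 1) z = z := by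
        unfold mx; rw [e1, e2]; simp
      rw [e3] at hm
      simpa [hty, hs0] using hm
    · have htp : (0 : ℝ) < t := unitInterval.pos_iff_ne_zero.2 ht
      have hcu : ContinuousAt (fun s : unitInterval => 1 / (s : ℝ) - 1) t :=
        (continuousAt_const.div continuous_subtype_val.continuousAt htp.ne').sub continuousAt_const
      have hev1 : ∀ᶠ s : unitInterval in nhds t, (0 : ℝ) < s :=
        continuousAt_const.eventually_lt continuous_subtype_val.continuousAt htp
      have hev2 : ∀ᶠ s : unitInterval in nhds t, 1 / (s : ℝ) - 1 < ⌊1 / (t : ℝ) - 1⌋₊ + 1 :=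
        hcu.eventually_lt continuousAt_const (Nat.lt_floor_add_one _)
      have hev3 : ∀ᶠ s : unitInterval in nhds t, ⌈1 / (t : ℝ) - 1⌉₊ - 1 = 0 ∨
          ((⌈1 / (t : ℝ) - 1⌉₊ - 1 : ℕ) : ℝ) < 1 / (s : ℝ) - 1 := by
        by_cases h0 : ⌈1 / (t : ℝ) - 1⌉₊ - 1 = 0
        · exact Filter.Eventually.of_forall fun _ => Or.inl h0
        · have : ((⌈1 / (t : ℝ) - 1⌉₊ - 1 : ℕ) : ℝ) < 1 / (t : ℝ) - 1 := by
            rw [← Nat.lt_ceil]; omega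
          filter_upwards [continuousAt_const.eventually_lt hcu this] with s hs
          exact Or.inr hs
      filter_upwards [hev1, hev2, hev3] with s hs1 hs2 hs3 w hw
      have hs0 : s ≠ 0 := unitInterval.pos_iff_ne_zero.1 hs1
      simp only [hty, hs0, ht, if_false]
      generalize 1 / (s : ℝ) - 1 = us at *
      generalize 1 / (t : ℝ) - 1 = ut at *
      obtain ⟨h1, h2⟩ := fl_ce ut
      obtain ⟨h3, h4⟩ := fl_ce us
      have g1 : ⌊us⌋₊ < ⌊ut⌋₊ + 1 := by
        rw [Nat.floor_lt' (by omega)]; push_cast; exact hs2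
      have g2 : ⌈us⌉₊ ≤ ⌊ut⌋₊ + 1 := by
        rw [Nat.ceil_le]; push_cast; exact hs2.le
      have g3 : ⌈ut⌉₊ - 1 = 0 ∨ ⌈ut⌉₊ - 1 < ⌈us⌉₊ := by
        rcases hs3 with h | h
        · exact Or.inl h
        · exact Or.inr (Nat.lt_ceil.2 h)
      have g4 : ⌈ut⌉₊ - 1 ≤ ⌊us⌋₊ := by
        rcases hs3 with h | h
        · omega
        · exact Nat.le_floor h.le
      have a1 : ⌊us⌋₊ = ⌊ut⌋₊ ∨ ⌊us⌋₊ = ⌈ut⌉₊ - 1 := by omega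
      have a2 : ⌈us⌉₊ - 1 = ⌊ut⌋₊ ∨ ⌈us⌉₊ - 1 = ⌈ut⌉₊ - 1 := by omega
      refine specLE_trans' ?_ (mx_mono hchain x p hp hu _ _ h1 h2 w z hw)
      obtain ⟨l1, l2⟩ := le_mx x p hp _ _ h1 h2 w
      have a3 : mx x p ⌊us⌋₊ (⌈us⌉₊ - 1) w = anc x p ⌊ut⌋₊ w ∨
          mx x p ⌊us⌋₊ (⌈us⌉₊ - 1) w = anc x p (⌈ut⌉₊ - 1) w := by
        rw [mx]
        split_ifs
        · rcases a1 with h | h <;> rw [h] <;> simp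
        · rcases a2 with h | h <;> rw [h] <;> simp
      rcases a3 with h | h <;> rw [h]
      · exact l1
      · exact l2
  rw [continuous_iff_continuousAt]
  rintro ⟨z, t⟩
  rw [ContinuousAt, Filter.tendsto_def]
  intro U hU
  have hz : nhdsKer {z} ∈ nhds z := isOpen_nhdsKer.mem_nhds 
    (by rw [Set.singleton_subset_iff.symm]; exact subset_nhdsKer)
  rw [nhds_prod_eq]
  refine Filter.mem_of_superset (Filter.prod_mem_prod hz (key z t)) ?_
  rintro ⟨w, s⟩ ⟨h1, h2⟩
  have h3 := h2 w ((specLE_iff' _ _).2 (mem_nhdsKer_singleton.1 h1))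
  show hty x p (w, s) ∈ U
  exact mem_of_mem_nhds (((specLE_iff' _ _).1 h3) hU)

end helpers

/-- If `X` is a T0 Alexandroff space in which every chain is finite and `x ∈ X` is such
that every `y ∈ X` is joined to `x` by a unique s-path in which consecutive points cover
one another, then `{x}` is a strong deformation retract of `X`. -/
theorem stmt14 {X : Type*} [TopologicalSpace X] [AlexandrovDiscrete X] [T0Space X]
    (hchain : ∀ C : Set X, (∀ a ∈ C, ∀ b ∈ C, a ≠ b → specComp a b) → C.Finite)
    (x : X) (huniq : ∀ y : X, ∃! l : List X, IsCoverSPath l x y) :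
    ∃ H : X × unitInterval → X, Continuous H ∧
      (∀ z, H (z, 0) = z) ∧ (∀ z, H (z, 1) = x) ∧ ∀ t, H (x, t) = x := by
  choose p hp hu using huniq
  replace hu : ∀ y l, IsCoverSPath l x y → l = p y := hu
  refine ⟨hty x p, hty_cont hchain x p hp hu, ?_, ?_, ?_⟩
  · intro z; simp [hty]
  · intro z
    simp [hty, mx, anc_zero x p hp]
  · intro t
    have hx : p x = [x] := (hu x [x] ⟨by simp, by simp, by simp, by simp, by
      show List.IsChain _ _
      simp⟩).symm
    have ha : ∀ n, anc x p n x = x := fun n => anc_big x p hp n x (by rw [hx]; simp)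
    simp [hty, mx, ha]
end

section
/- Let X and Y be T0 Alexandroff spaces in which every s-path is finite (fp-spaces), and suppose X^C ⊆ X and Y^C ⊆ Y are subspaces that are C-cores and are strong deformation retracts of X and Y respectively. Then X is homotopy equivalent to Y if and only if X^C is homeomorphic to Y^C. -/
/-- `X` is an fp-space: every s-path (sequence of pairwise distinct points with
consecutive points comparable) is finite, i.e. there is no infinite s-path. -/
def NoInfiniteSPath (X : Type*) [TopologicalSpace X] : Prop :=
  ¬ ∃ p : ℕ → X, Function.Injective p ∧ ∀ n, specComp (p n) (p (n + 1))

/-- `X` is a C-core: its only comparative retraction is the identity. -/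
def IsCCore (X : Type*) [TopologicalSpace X] : Prop :=
  ∀ r : X → X, Continuous r → r ∘ r = r → (∀ x, specComp (r x) x) → r = id

/-- `A` is a strong deformation retract of `X`. -/
def IsSDR {X : Type*} [TopologicalSpace X] (A : Set X) : Prop :=
  ∃ H : X × unitInterval → X, Continuous H ∧
    (∀ z, H (z, 0) = z) ∧ (∀ z, H (z, 1) ∈ A) ∧ ∀ a ∈ A, ∀ t, H (a, t) = a

lemma aux_noseq {X : Type*} [TopologicalSpace X] (hX : NoInfiniteSPath X)
    (S : Set X) (hS : S.Nonempty) (R : X → X → Prop) (hirr : ∀ a ∈ S, ¬ R a a)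
    (htr : ∀ a ∈ S, ∀ b ∈ S, ∀ c ∈ S, R a b → R b c → R a c)
    (hst : ∀ a ∈ S, ∃ b ∈ S, R a b ∧ specComp a b) : False := by
  choose! g hgS hgR hgc using hst
  obtain ⟨a, ha⟩ := hS
  let p : ℕ → X := fun n => g^[n] a
  have hp : ∀ n, p (n + 1) = g (p n) := fun n => Function.iterate_succ_apply' g n a
  have hpS : ∀ n, p n ∈ S := by
    intro n
    induction n with
    | zero => exact ha
    | succ n ih => rw [hp]; exact hgS _ ih
  have hlt : ∀ m k, R (p m) (p (m + k + 1)) := by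
    intro m k
    induction k with
    | zero => rw [Nat.add_zero, hp]; exact hgR _ (hpS m)
    | succ k ih =>
      refine htr _ (hpS _) _ (hpS (m + k + 1)) _ (hpS _) ih ?_
      rw [show m + (k + 1) + 1 = (m + k + 1) + 1 by omega, hp (m + k + 1)]
      exact hgR _ (hpS _)
  have hlt' : ∀ m n, m < n → p m ≠ p n := by
    intro m n h e
    obtain ⟨k, rfl⟩ := Nat.exists_eq_add_of_lt h
    have := hlt m k
    rw [← e] at this
    exact hirr _ (hpS m) this
  refine hX ⟨p, ?_, ?_⟩
  · intro m n e
    rcases lt_trichotomy m n with h | h | h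
    · exact absurd e (hlt' _ _ h)
    · exact h
    · exact absurd e.symm (hlt' _ _ h)
  · intro n
    rw [hp]; exact hgc _ (hpS n)

lemma aux_specLE {X : Type*} [TopologicalSpace X] {x y : X} : specLE x y ↔ x ⤳ y :=
  specializes_iff_mem_closure.symm

lemma aux_cont {X : Type*} [TopologicalSpace X] [AlexandrovDiscrete X] (r : X → X)
    (h : ∀ x y, x ⤳ y → r x ⤳ r y) : Continuous r := by
  rw [continuous_def]
  intro s hs
  rw [isOpen_iff_forall_specializes]
  intro x y hxy hy
  exact (h x y hxy).mem_open hs hy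

lemma aux_beat {X : Type*} [TopologicalSpace X] [AlexandrovDiscrete X]
    (hc : IsCCore X) (x y : X) (hne : y ≠ x) (hcomp : specComp y x)
    (h1 : ∀ z, z ≠ x → z ⤳ x → z ⤳ y) (h2 : ∀ z, z ≠ x → x ⤳ z → y ⤳ z) : False := by
  classical
  have := hc (fun z => if z = x then y else z) ?_ ?_ ?_
  · have := congrFun this x
    simp at this
    exact hne this
  · apply aux_cont
    intro a b hab
    by_cases ha : a = x <;> by_cases hb : b = x <;> simp only [ha, hb, if_true, if_false]
    · exact specializes_rfl
    · exact h2 b hb (ha ▸ hab)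
    · exact h1 a ha (hb ▸ hab)
    · exact hab
  · funext z
    by_cases hz : z = x <;> simp [hz]
  · intro z
    by_cases hz : z = x
    · simpa [hz] using hcomp
    · simp only [hz, if_false]
      exact Or.inl (aux_specLE.2 specializes_rfl)

lemma aux_nhd {X : Type*} [TopologicalSpace X] [AlexandrovDiscrete X]
    (γ : unitInterval → X) (hγ : Continuous γ) (t : unitInterval) :
    ∀ᶠ s in nhds t, γ s ⤳ γ t := by
  have : IsOpen {z : X | z ⤳ γ t} := by
    rw [isOpen_iff_forall_specializes]
    intro a b hab hb
    exact hab.trans hb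
  exact (hγ.continuousAt (x := t)).eventually (this.mem_nhds (show γ t ⤳ γ t from specializes_rfl))

lemma aux_rigid {X : Type*} [TopologicalSpace X] [AlexandrovDiscrete X] [T0Space X]
    (hX : NoInfiniteSPath X) (hc : IsCCore X) (H : X → unitInterval → X)
    (hH0 : ∀ x, H x 0 = x) (hHx : ∀ x, Continuous (H x))
    (hHt : ∀ t, Continuous fun x => H x t) : ∀ x t, H x t = x := by
  have anti : ∀ {a b : X}, a ⤳ b → b ⤳ a → a = b := fun h1 h2 => (h1.antisymm h2).eq
  by_contra! hcon
  obtain ⟨x0, t0, h0⟩ := hcon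
  let M : X → Set unitInterval := fun x => {t | H x t ≠ x}
  let T : X → unitInterval := fun x => sInf (M x)
  have hTle : ∀ x t, H x t ≠ x → T x ≤ t := fun x t h => sInf_le h
  have hTfix : ∀ x t, t < T x → H x t = x := by
    intro x t h
    by_contra hne
    exact absurd (hTle x t hne) (not_le.2 h)
  have mono : ∀ t {a b : X}, a ⤳ b → H a t ⤳ H b t := fun t a b h => h.map (hHt t)
  let R : X → X → Prop := fun x z => T z < T x ∨ (T z = T x ∧
    ((H x (T x) = x ∧ H z (T z) ≠ z) ∨ (H x (T x) = x ∧ H z (T z) = z ∧ z ⤳ x ∧ z ≠ x) ∨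
      (H x (T x) ≠ x ∧ H z (T z) ≠ z ∧ x ⤳ z ∧ z ≠ x)))
  refine aux_noseq hX {x | (M x).Nonempty} ⟨x0, t0, h0⟩ R ?_ ?_ ?_
  · intro a _ h
    simp only [R] at h
    simp at h
  · intro a _ b _ c _ hab hbc
    rcases hab with hab | ⟨e1, hab⟩
    · rcases hbc with hbc | ⟨e2, hbc⟩
      · exact Or.inl (hbc.trans hab)
      · exact Or.inl (e2 ▸ hab)
    · rcases hbc with hbc | ⟨e2, hbc⟩
      · exact Or.inl (e1 ▸ hbc)
      · refine Or.inr ⟨e2.trans e1, ?_⟩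
        rcases hab with ⟨a1, a2⟩ | ⟨a1, a2, a3, a4⟩ | ⟨a1, a2, a3, a4⟩ <;>
        rcases hbc with ⟨b1, b2⟩ | ⟨b1, b2, b3, b4⟩ | ⟨b1, b2, b3, b4⟩
        · exact absurd b1 a2
        · exact absurd b1 a2
        · exact Or.inl ⟨a1, b2⟩
        · exact Or.inl ⟨a1, b2⟩
        · refine Or.inr (Or.inl ⟨a1, b2, b3.trans a3, ?_⟩)
          rintro rfl
          exact a4 (anti a3 b3)
        · exact absurd a2 b1
        · exact absurd b1 a2
        · exact absurd b1 a2
        · refine Or.inr (Or.inr ⟨a1, b2, a3.trans b3, ?_⟩)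
          rintro rfl
          exact a4 (anti b3 a3)
  · intro x hx
    by_cases hcase : H x (T x) = x
    · -- case 1
      by_contra hno
      have key : ∀ z, z ⤳ x → z ≠ x → ∀ᶠ t in nhds (T x), H z t = z := by
        intro z hzx hne
        by_cases hz : (M z).Nonempty
        · have hlt : T x < T z := by
            by_contra hle
            rw [not_lt] at hle
            refine hno ⟨z, hz, ?_, Or.inr (aux_specLE.2 hzx)⟩
            rcases hle.lt_or_eq with h | h
            · exact Or.inl h
            · refine Or.inr ⟨h, ?_⟩
              by_cases hz2 : H z (T z) = z
              · exact Or.inr (Or.inl ⟨hcase, hz2, hzx, hne⟩)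
              · exact Or.inl ⟨hcase, hz2⟩
          filter_upwards [eventually_lt_nhds hlt] with t ht
          exact hTfix z t ht
        · refine Filter.Eventually.of_forall fun t => ?_
          by_contra h
          exact hz ⟨t, h⟩
      have hfreq : ∃ᶠ t in nhds (T x), t ∈ M x :=
        mem_closure_iff_frequently.1 (csInf_mem_closure hx (OrderBot.bddBelow _))
      have hnear := aux_nhd (H x) (hHx x) (T x)
      rw [hcase] at hnear
      refine aux_noseq hX {y | y ⤳ x ∧ y ≠ x} ?_ (fun a b => a ⤳ b ∧ a ≠ b) ?_ ?_ ?_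
      · obtain ⟨t, h1, h2⟩ := (hfreq.and_eventually hnear).exists
        exact ⟨H x t, h2, h1⟩
      · intro a _ h
        exact h.2 rfl
      · rintro a _ b _ c _ ⟨h1, h2⟩ ⟨h3, h4⟩
        refine ⟨h1.trans h3, ?_⟩
        rintro rfl
        exact h2 (anti h1 h3)
      · rintro y ⟨hyx, hyne⟩
        obtain ⟨z, hzne, hzx, hzy⟩ : ∃ z, z ≠ x ∧ z ⤳ x ∧ ¬ z ⤳ y := by
          by_contra! h
          exact aux_beat hc x y hyne (Or.inl (aux_specLE.2 hyx)) h
            (fun z _ hz => hyx.trans hz)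
        obtain ⟨t, ⟨h1, h2⟩, h3, h4⟩ := ((hfreq.and_eventually hnear).and_eventually
          ((key y hyx hyne).and (key z hzx hzne))).exists
        have hy := mono t hyx
        have hz := mono t hzx
        rw [h3] at hy
        rw [h4] at hz
        refine ⟨H x t, ⟨h2, h1⟩, ⟨hy, ?_⟩, Or.inl (aux_specLE.2 hy)⟩
        intro e
        rw [← e] at hz
        exact hzy hz
    · -- case 2
      have hup : x ⤳ H x (T x) := by
        have hpos : 0 < T x := by
          rw [pos_iff_ne_zero]
          intro e
          rw [e, hH0] at hcase
          exact hcase rfl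
        have hnear := aux_nhd (H x) (hHx x) (T x)
        have hcl : T x ∈ closure (Set.Iio (T x)) := by
          rw [closure_Iio' (a := T x) ⟨(0 : unitInterval), hpos⟩]; exact Set.mem_Iic.2 le_rfl
        obtain ⟨t, h1, h2⟩ := ((mem_closure_iff_frequently.1 hcl).and_eventually hnear).exists
        rwa [hTfix x t h1] at h2
      obtain ⟨z, hzne, hxz, hyz⟩ : ∃ z, z ≠ x ∧ x ⤳ z ∧ ¬ H x (T x) ⤳ z := by
        by_contra! h
        exact aux_beat hc x _ hcase (Or.inr (aux_specLE.2 hup))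
            (fun z _ hz => hz.trans hup) h
      have hz : H z (T x) ≠ z := by
        intro e
        have := mono (T x) hxz
        rw [e] at this
        exact hyz this
      refine ⟨z, ⟨_, hz⟩, ?_, Or.inl (aux_specLE.2 hxz)⟩
      rcases (hTle z _ hz).lt_or_eq with h | h
      · exact Or.inl h
      · refine Or.inr ⟨h, Or.inr (Or.inr ⟨hcase, ?_, hxz, hzne⟩)⟩
        rw [h]; exact hz

lemma aux_rigid' {X : Type*} [TopologicalSpace X] [AlexandrovDiscrete X] [T0Space X]
    (hX : NoInfiniteSPath X) (hc : IsCCore X) (f : C(X, X))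
    (h : f.Homotopic (ContinuousMap.id X)) : ∀ x, f x = x := by
  obtain ⟨F⟩ := h.symm
  intro x
  have := aux_rigid hX hc (fun x t => F (t, x)) (by simp) (fun x => by fun_prop)
    (fun t => by fun_prop) x 1
  simpa using this

lemma aux_sub {X : Type*} [TopologicalSpace X] (hX : NoInfiniteSPath X) (A : Set X) :
    NoInfiniteSPath A := by
  rintro ⟨p, hp, hc⟩
  refine hX ⟨fun n => (p n : X), Subtype.val_injective.comp hp, fun n => ?_⟩
  rcases hc n with h | h
  · exact Or.inl (aux_specLE.2 ((aux_specLE.1 h).map continuous_subtype_val))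
  · exact Or.inr (aux_specLE.2 ((aux_specLE.1 h).map continuous_subtype_val))

lemma aux_sdr {X : Type*} [TopologicalSpace X] {A : Set X} (h : IsSDR A) :
    Nonempty (ContinuousMap.HomotopyEquiv A X) := by
  obtain ⟨H, hc, h0, h1, ha⟩ := h
  refine ⟨⟨⟨Subtype.val, continuous_subtype_val⟩,
    ⟨fun x => ⟨H (x, 1), h1 x⟩, by fun_prop⟩, ?_, ?_⟩⟩
  · convert ContinuousMap.Homotopic.refl (ContinuousMap.id A)
    ext a
    exact ha a a.2 1
  · refine ContinuousMap.Homotopic.symm ⟨⟨⟨fun p => H (p.2, p.1), by fun_prop⟩, ?_, ?_⟩⟩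
    · intro x; exact h0 x
    · intro x; rfl

/-- If `X`, `Y` are T0 Alexandroff fp-spaces with subspaces `X^C ⊆ X`, `Y^C ⊆ Y` that are
C-cores and strong deformation retracts, then `X` and `Y` are homotopy equivalent iff
`X^C` and `Y^C` are homeomorphic. -/
theorem stmt18 {X Y : Type*} [TopologicalSpace X] [AlexandrovDiscrete X] [T0Space X]
    [TopologicalSpace Y] [AlexandrovDiscrete Y] [T0Space Y]
    (hX : NoInfiniteSPath X) (hY : NoInfiniteSPath Y)
    (XC : Set X) (YC : Set Y) (hXc : IsCCore ↥XC) (hYc : IsCCore ↥YC)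
    (hXr : IsSDR XC) (hYr : IsSDR YC) :
    Nonempty (ContinuousMap.HomotopyEquiv X Y) ↔ Nonempty (↥XC ≃ₜ ↥YC) := by
  obtain ⟨eX⟩ := aux_sdr hXr
  obtain ⟨eY⟩ := aux_sdr hYr
  have : AlexandrovDiscrete XC := Topology.IsInducing.subtypeVal.alexandrovDiscrete
  have : AlexandrovDiscrete YC := Topology.IsInducing.subtypeVal.alexandrovDiscrete
  constructor
  · rintro ⟨e⟩
    let k := (eX.trans e).trans eY.symm
    exact ⟨⟨⟨k.toFun, k.invFun, aux_rigid' (aux_sub hX XC) hXc _ k.left_inv,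
      aux_rigid' (aux_sub hY YC) hYc _ k.right_inv⟩, k.toFun.continuous, k.invFun.continuous⟩⟩
  · rintro ⟨e⟩
    exact ⟨(eX.symm.trans e.toHomotopyEquiv).trans eY⟩
end
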